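/- Let Ω ⊂ ℝⁿ be open with finite Lebesgue measure and let u ∈ H¹₀(Ω) ∩ C(Ω). If ω is a connected component of {x ∈ Ω : u(x) ≠ 0}, then the restriction u|_ω belongs to H¹₀(ω). -/

import Mathlib

open MeasureTheory Filter

/-- `u` belongs to `H¹₀(Ω)`: there is a sequence of `C¹` functions compactly supported in `Ω`
converging to `u` in `L²` and Cauchy in the `H¹` (gradient `L²`) seminorm. -/
def MemH10 {n : ℕ} (Ω : Set (EuclideanSpace ℝ (Fin n)))
    (u : EuclideanSpace ℝ (Fin n) → ℝ) : Prop :=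
  ∃ φ : ℕ → EuclideanSpace ℝ (Fin n) → ℝ,
    (∀ m, ContDiff ℝ 1 (φ m) ∧ HasCompactSupport (φ m) ∧ tsupport (φ m) ⊆ Ω) ∧
    Tendsto (fun m => eLpNorm (u - φ m) 2 volume) atTop (nhds 0) ∧
    ∀ ε : ℝ, 0 < ε → ∃ N, ∀ m l, N ≤ m → N ≤ l →
      eLpNorm (fun x => fderiv ℝ (φ m) x - fderiv ℝ (φ l) x) 2 volume < ENNReal.ofReal ε

/-- Asymptotically minimal elements of nested midpoint-convex sets form a Cauchy sequence. -/
theorem exists_cauchy_of_nested {H : Type*} [NormedAddCommGroup H] [InnerProductSpace ℝ H]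
    (A : ℕ → Set H) (hanti : ∀ k l, k ≤ l → A l ⊆ A k)
    (hmid : ∀ k, ∀ a ∈ A k, ∀ b ∈ A k, (1 / 2 : ℝ) • (a + b) ∈ A k)
    (C : ℝ) (hC : ∀ k, ∃ a ∈ A k, ‖a‖ ≤ C) :
    ∃ d : ℕ → H, (∀ k, d k ∈ A k) ∧ CauchySeq d := by
  set I : ℕ → ℝ := fun k => sInf ((fun a => ‖a‖ ^ 2) '' A k) with hI
  have hbdd : ∀ k, BddBelow ((fun a : H => ‖a‖ ^ 2) '' A k) := by
    intro k
    refine ⟨0, ?_⟩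
    rintro _ ⟨a, -, rfl⟩
    positivity
  have hIle : ∀ k, ∀ a ∈ A k, I k ≤ ‖a‖ ^ 2 := fun k a ha => csInf_le (hbdd k) ⟨a, ha, rfl⟩
  have hne : ∀ k, ((fun a : H => ‖a‖ ^ 2) '' A k).Nonempty := by
    intro k
    obtain ⟨a, ha, -⟩ := hC k
    exact ⟨_, a, ha, rfl⟩
  have hmono : Monotone I := by
    intro k l hkl
    exact csInf_le_csInf (hbdd k) (hne l) (Set.image_mono (hanti k l hkl))
  have hIC : ∀ k, I k ≤ C ^ 2 := by
    intro k
    obtain ⟨a, ha, hac⟩ := hC k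
    exact (hIle k a ha).trans (by gcongr)
  have hch : ∀ k, ∃ a ∈ A k, ‖a‖ ^ 2 < I k + 1 / ((k : ℝ) + 1) := by
    intro k
    obtain ⟨_, ⟨a, ha, rfl⟩, h⟩ := exists_lt_of_csInf_lt (hne k)
      (show I k < I k + 1 / ((k : ℝ) + 1) by
        have : (0 : ℝ) < 1 / ((k : ℝ) + 1) := by positivity
        linarith)
    exact ⟨a, ha, h⟩
  choose d hd hdI using hch
  refine ⟨d, hd, ?_⟩
  have hlim : Tendsto I atTop (nhds (⨆ k, I k)) :=
    tendsto_atTop_ciSup hmono ⟨C ^ 2, by rintro _ ⟨k, rfl⟩; exact hIC k⟩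
  set L := ⨆ k, I k
  have hIL : ∀ k, I k ≤ L := fun k =>
    le_ciSup (f := I) ⟨C ^ 2, by rintro _ ⟨k, rfl⟩; exact hIC k⟩ k
  have hone : Tendsto (fun k : ℕ => 1 / ((k : ℝ) + 1)) atTop (nhds 0) :=
    tendsto_one_div_add_atTop_nhds_zero_nat
  rw [Metric.cauchySeq_iff]
  intro ε hε
  have hε2 : 0 < ε ^ 2 / 8 := by positivity
  have h1 : ∀ᶠ k in atTop, L - ε ^ 2 / 8 < I k := hlim.eventually_const_lt (by linarith)
  have h2 : ∀ᶠ k : ℕ in atTop, 1 / ((k : ℝ) + 1) < ε ^ 2 / 8 := hone.eventually_lt_const hε2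
  obtain ⟨N, hN⟩ := eventually_atTop.1 (h1.and h2)
  refine ⟨N, fun m hm l hl => ?_⟩
  have hpar := parallelogram_law_with_norm ℝ (d m) (d l)
  have hmidN := hIle N _ (hmid N _ (hanti N m hm (hd m)) _ (hanti N l hl (hd l)))
  rw [norm_smul, mul_pow] at hmidN
  norm_num at hmidN
  have e1 := hdI m
  have e2 := hdI l
  have e3 := (hN m hm).2
  have e4 := (hN l hl).2
  have e5 := (hN N le_rfl).1
  have e6 := hIL m
  have e7 := hIL l
  rw [dist_eq_norm]
  refine lt_of_pow_lt_pow_left₀ 2 hε.le ?_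
  nlinarith

/-- Minkowski-type inequality for averages against a probability measure. -/
theorem eLpNorm_average_le {X Y : Type*} [MeasurableSpace X] [MeasurableSpace Y]
    (μ : Measure X) [SFinite μ] (ν : Measure Y) [IsProbabilityMeasure ν] (F : X → Y → ℝ)
    (hF : Measurable (Function.uncurry F)) (B : ENNReal)
    (hB : ∀ᵐ y ∂ν, eLpNorm (fun x => F x y) 2 μ ≤ B) :
    eLpNorm (fun x => ∫ y, F x y ∂ν) 2 μ ≤ B := by
  have hsq : ∀ {Z : Type _} [MeasurableSpace Z] (κ : Measure Z) (f : Z → ℝ),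
      eLpNorm f 2 κ ^ 2 = ∫⁻ z, ‖f z‖ₑ ^ 2 ∂κ := by
    intro Z _ κ f
    have := eLpNorm_nnreal_pow_eq_lintegral (f := f) (μ := κ) (p := 2) (by norm_num)
    simpa using this
  have hsq' : ∀ {Z : Type _} [MeasurableSpace Z] (κ : Measure Z) (f : Z → ℝ),
      eLpNorm f 2 κ ^ 2 = ∫⁻ z, ‖f z‖ₑ ^ 2 ∂κ := by
    intro Z _ κ f
    have := eLpNorm_nnreal_pow_eq_lintegral (f := f) (μ := κ) (p := 2) (by norm_num)
    simpa using this
  rw [← ENNReal.pow_le_pow_left_iff (n := 2) (by norm_num), hsq]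
  calc ∫⁻ x, ‖∫ y, F x y ∂ν‖ₑ ^ 2 ∂μ ≤ ∫⁻ x, ∫⁻ y, ‖F x y‖ₑ ^ 2 ∂ν ∂μ := by
        refine lintegral_mono fun x => ?_
        simp only []
        rw [← hsq']
        gcongr
        refine (enorm_integral_le_lintegral_enorm _).trans ?_
        rw [← eLpNorm_one_eq_lintegral_enorm]
        refine eLpNorm_le_eLpNorm_of_exponent_le (by norm_num) ?_
        exact (hF.comp measurable_prodMk_left).aestronglyMeasurable
    _ = ∫⁻ y, ∫⁻ x, ‖F x y‖ₑ ^ 2 ∂μ ∂ν := by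
        refine lintegral_lintegral_swap ?_
        exact (hF.enorm.pow_const 2).aemeasurable
    _ ≤ ∫⁻ y, B ^ 2 ∂ν := by
        refine lintegral_mono_ae ?_
        filter_upwards [hB] with y hy
        rw [← hsq]
        gcongr
    _ = B ^ 2 := by simp

theorem eLpNorm_translate {n : ℕ} {F : Type*} [NormedAddCommGroup F]
    {f : EuclideanSpace ℝ (Fin n) → F} (hf : AEStronglyMeasurable f volume)
    (h : EuclideanSpace ℝ (Fin n)) :
    eLpNorm (fun x => f (x + h)) 2 volume = eLpNorm f 2 volume :=
  eLpNorm_comp_measurePreserving hf (measurePreserving_add_right volume h)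

/-- Translation estimate for `C¹` functions. -/
theorem translate_le {n : ℕ} {φ : EuclideanSpace ℝ (Fin n) → ℝ} (hφ : ContDiff ℝ 1 φ)
    (h : EuclideanSpace ℝ (Fin n)) :
    eLpNorm (fun x => φ (x + h) - φ x) 2 volume ≤
      ‖h‖ₑ * eLpNorm (fderiv ℝ φ) 2 volume := by
  have hc : Continuous (fderiv ℝ φ) := hφ.continuous_fderiv one_ne_zero
  have key : ∀ x, φ (x + h) - φ x =
      ∫ t, fderiv ℝ φ (x + t • h) h ∂(volume.restrict (Set.Ioc (0:ℝ) 1)) := by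
    intro x
    rw [← intervalIntegral.integral_of_le zero_le_one]
    have := intervalIntegral.integral_eq_sub_of_hasDerivAt (a := 0) (b := 1)
      (f := fun t : ℝ => φ (x + t • h)) (f' := fun t : ℝ => fderiv ℝ φ (x + t • h) h) ?_ ?_
    · rw [this]; simp
    · intro t _
      have h1 : HasDerivAt (fun t : ℝ => x + t • h) h t := by
        simpa using ((hasDerivAt_id t).smul_const h).const_add x
      exact ((hφ.differentiable one_ne_zero) (x + t • h)).hasFDerivAt.comp_hasDerivAt t h1
    · apply Continuous.intervalIntegrable
      fun_prop
  simp_rw [key]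
  have : IsProbabilityMeasure (volume.restrict (Set.Ioc (0:ℝ) 1)) := ⟨by simp⟩
  refine eLpNorm_average_le _ _ (fun x t => fderiv ℝ φ (x + t • h) h) ?_ _ ?_
  · apply Continuous.measurable
    unfold Function.uncurry
    fun_prop
  · refine Eventually.of_forall fun t => ?_
    rw [← eLpNorm_translate hc.aestronglyMeasurable (t • h)]
    have := eLpNorm_const_smul (c := ‖h‖) (f := fun x => fderiv ℝ φ (x + t • h)) (p := 2)
      (μ := volume)
    rw [enorm_norm] at this
    rw [← this]
    refine eLpNorm_mono fun x => ?_
    simp only [Pi.smul_apply, norm_smul, norm_norm]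
    rw [mul_comm]
    exact ContinuousLinearMap.le_opNorm _ _

/-- Gradient bound from translation estimates. -/
theorem fderiv_le_of_translate {n : ℕ} {ψ : EuclideanSpace ℝ (Fin n) → ℝ}
    (hψ : ContDiff ℝ 1 ψ) (A : ENNReal) (r : ℝ) (hr : 0 < r)
    (hA : ∀ h : EuclideanSpace ℝ (Fin n), ‖h‖ < r →
      eLpNorm (fun x => ψ (x + h) - ψ x) 2 volume ≤ A * ‖h‖ₑ) :
    eLpNorm (fderiv ℝ ψ) 2 volume ≤ n * A := by
  have hc : Continuous (fderiv ℝ ψ) := hψ.continuous_fderiv one_ne_zero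
  have hdir : ∀ e : EuclideanSpace ℝ (Fin n), ‖e‖ = 1 →
      eLpNorm (fun x => fderiv ℝ ψ x e) 2 volume ≤ A := by
    intro e he
    set t : ℕ → ℝ := fun k => r / 2 / ((k : ℝ) + 1) with ht
    have htpos : ∀ k, 0 < t k := fun k => by positivity
    have htr : ∀ k, t k < r := by
      intro k
      have : t k ≤ r / 2 := div_le_self (by positivity) (by linarith [(Nat.cast_nonneg k : (0:ℝ) ≤ k)])
      linarith
    have ht0 : Tendsto t atTop (nhds 0) := by
      have := (tendsto_one_div_add_atTop_nhds_zero_nat (𝕜 := ℝ)).const_mul (r / 2)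
      simpa [ht, div_eq_mul_inv] using this
    have hle := Lp.eLpNorm_lim_le_liminf_eLpNorm (p := 2) (μ := volume)
      (f := fun k x => (t k)⁻¹ • (ψ (x + t k • e) - ψ x))
      (fun k => by
        apply Continuous.aestronglyMeasurable
        have := hψ.continuous
        fun_prop) (fun x => fderiv ℝ ψ x e) ?_
    · refine hle.trans ?_
      refine liminf_le_of_frequently_le' (Eventually.frequently (Eventually.of_forall fun k => ?_))
      have h1 := eLpNorm_const_smul (c := (t k)⁻¹) (f := fun x => ψ (x + t k • e) - ψ x) (p := 2)
        (μ := volume)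
      have h2 := hA (t k • e) (by rw [norm_smul, he, mul_one, Real.norm_of_nonneg (htpos k).le]; exact htr k)
      calc _ = ‖(t k)⁻¹‖ₑ * eLpNorm (fun x => ψ (x + t k • e) - ψ x) 2 volume := h1
        _ ≤ ‖(t k)⁻¹‖ₑ * (A * ‖t k • e‖ₑ) := by gcongr
        _ = A * ‖(t k)⁻¹ • (t k • e)‖ₑ := by rw [enorm_smul (t k)⁻¹]; ring
        _ = A := by
          rw [smul_smul, inv_mul_cancel₀ (htpos k).ne', one_smul, ← ofReal_norm, he]; simp
    · refine Eventually.of_forall fun x => ?_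
      have h1 : HasDerivAt (fun s : ℝ => x + s • e) e 0 := by
        simpa using ((hasDerivAt_id (0:ℝ)).smul_const e).const_add x
      have h2 : HasDerivAt (fun s : ℝ => ψ (x + s • e)) (fderiv ℝ ψ x e) 0 := by
        have h3 : HasFDerivAt ψ (fderiv ℝ ψ x) (x + (0:ℝ) • e) := by
          simpa using ((hψ.differentiable one_ne_zero) x).hasFDerivAt
        exact h3.comp_hasDerivAt (0:ℝ) h1
      rw [hasDerivAt_iff_tendsto_slope_zero] at h2
      have h4 : Tendsto t atTop (nhdsWithin 0 {0}ᶜ) :=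
        tendsto_nhdsWithin_iff.2 ⟨ht0, Eventually.of_forall fun k => (htpos k).ne'⟩
      simpa [Function.comp_def] using h2.comp h4
  set b := EuclideanSpace.basisFun (Fin n) ℝ
  calc eLpNorm (fderiv ℝ ψ) 2 volume
      ≤ eLpNorm (∑ i : Fin n, fun x => ‖fderiv ℝ ψ x (b i)‖) 2 volume := by
        refine eLpNorm_mono fun x => ?_
        rw [Finset.sum_apply, Real.norm_of_nonneg (Finset.sum_nonneg fun i _ => norm_nonneg _)]
        refine ContinuousLinearMap.opNorm_le_bound _ (Finset.sum_nonneg fun i _ => norm_nonneg _) ?_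
        intro v
        have hv : v = ∑ i, b.repr v i • b i := (b.sum_repr v).symm
        conv_lhs => rw [hv]
        rw [map_sum, Finset.sum_mul]
        refine (norm_sum_le _ _).trans (Finset.sum_le_sum fun i _ => ?_)
        rw [map_smul, norm_smul, mul_comm]
        gcongr
        rw [← b.repr.norm_map v]
        exact PiLp.norm_apply_le _ i
    _ ≤ ∑ i : Fin n, eLpNorm (fun x => ‖fderiv ℝ ψ x (b i)‖) 2 volume := by
        refine eLpNorm_sum_le (fun i _ => ?_) (by norm_num)
        apply Continuous.aestronglyMeasurable
        fun_prop
    _ ≤ ∑ i : Fin n, A := by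
        refine Finset.sum_le_sum fun i _ => ?_
        rw [eLpNorm_norm]
        exact hdir _ (b.orthonormal.1 i)
    _ = n * A := by simp

/-- A bounded approximating family suffices for membership in `H¹₀`. -/
theorem memH10_of_bdd {n : ℕ} {ω : Set (EuclideanSpace ℝ (Fin n))}
    {v : EuclideanSpace ℝ (Fin n) → ℝ} (hv : AEStronglyMeasurable v volume) (C : NNReal)
    (h : ∀ δ : ℝ, 0 < δ → ∃ ψ : EuclideanSpace ℝ (Fin n) → ℝ, ContDiff ℝ 1 ψ ∧
      HasCompactSupport ψ ∧ tsupport ψ ⊆ ω ∧ eLpNorm (v - ψ) 2 volume ≤ ENNReal.ofReal δ ∧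
      eLpNorm (fderiv ℝ ψ) 2 volume ≤ C) : MemH10 ω v := by
  set J := (InnerProductSpace.toDual ℝ (EuclideanSpace ℝ (Fin n))).symm with hJ
  have hLp : ∀ ψ : EuclideanSpace ℝ (Fin n) → ℝ, ContDiff ℝ 1 ψ → HasCompactSupport ψ →
      MemLp (fun x => J (fderiv ℝ ψ x)) 2 volume := by
    intro ψ h1 h2
    have hc : Continuous (fderiv ℝ ψ) := h1.continuous_fderiv one_ne_zero
    refine Continuous.memLp_of_hasCompactSupport (J.continuous.comp hc) ?_
    exact (h2.fderiv ℝ).comp_left (g := J) (map_zero J)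
  let P : ℕ → (EuclideanSpace ℝ (Fin n) → ℝ) → Prop := fun k ψ =>
    ContDiff ℝ 1 ψ ∧ HasCompactSupport ψ ∧ tsupport ψ ⊆ ω ∧
      eLpNorm (v - ψ) 2 volume ≤ ENNReal.ofReal (1 / ((k : ℝ) + 1))
  let A : ℕ → Set (Lp (EuclideanSpace ℝ (Fin n)) 2 (volume : Measure (EuclideanSpace ℝ (Fin n)))) :=
    fun k => {D | ∃ ψ, P k ψ ∧ D =ᵐ[volume] fun x => J (fderiv ℝ ψ x)}
  have key : ∃ d : ℕ → Lp (EuclideanSpace ℝ (Fin n)) 2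
      (volume : Measure (EuclideanSpace ℝ (Fin n))), (∀ k, d k ∈ A k) ∧ CauchySeq d := by
    refine exists_cauchy_of_nested A ?_ ?_ C ?_
    · rintro k l hkl D ⟨ψ, ⟨h1, h2, h3, h4⟩, h5⟩
      refine ⟨ψ, ⟨h1, h2, h3, h4.trans ?_⟩, h5⟩
      apply ENNReal.ofReal_le_ofReal
      gcongr
    · rintro k a ⟨ψ, ⟨h1, h2, h3, h4⟩, h5⟩ b ⟨ψ', ⟨h1', h2', h3', h4'⟩, h5'⟩
      refine ⟨(1 / 2 : ℝ) • (ψ + ψ'), ⟨?_, ?_, ?_, ?_⟩, ?_⟩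
      · exact (h1.add h1').const_smul (1 / 2 : ℝ)
      · exact HasCompactSupport.smul_left (f := fun _ => (1 / 2 : ℝ)) (h2.add h2')
      · refine (tsupport_smul_subset_right (fun _ => (1 / 2 : ℝ)) (ψ + ψ')).trans ?_
        exact (tsupport_add ψ ψ').trans (Set.union_subset h3 h3')
      · have e : v - (1 / 2 : ℝ) • (ψ + ψ') = (1 / 2 : ℝ) • ((v - ψ) + (v - ψ')) := by
          ext x
          simp only [Pi.sub_apply, Pi.smul_apply, Pi.add_apply, smul_eq_mul]
          ring
        rw [e, eLpNorm_const_smul]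
        have h6 := eLpNorm_add_le (p := 2) (hv.sub h1.continuous.aestronglyMeasurable)
          (hv.sub h1'.continuous.aestronglyMeasurable) (by norm_num)
        calc _ ≤ ‖(1 / 2 : ℝ)‖ₑ * (ENNReal.ofReal (1 / ((k : ℝ) + 1))
                + ENNReal.ofReal (1 / ((k : ℝ) + 1))) := by
              gcongr
              exact h6.trans (by gcongr)
          _ = ENNReal.ofReal (1 / ((k : ℝ) + 1)) := by
              rw [← ENNReal.ofReal_add (by positivity) (by positivity),
                Real.enorm_of_nonneg (by norm_num), ← ENNReal.ofReal_mul (by norm_num)]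
              congr 1
              ring
      · filter_upwards [h5, h5', Lp.coeFn_smul (1 / 2 : ℝ) (a + b), Lp.coeFn_add a b] with x e1 e2 e3 e4
        have d1 := (h1.differentiable one_ne_zero) x
        have d2 := (h1'.differentiable one_ne_zero) x
        rw [e3, Pi.smul_apply, e4, Pi.add_apply, e1, e2, fderiv_const_smul (d1.add d2),
          fderiv_add d1 d2, map_smul, map_add]
    · intro k
      obtain ⟨ψ, h1, h2, h3, h4, h5⟩ := h (1 / ((k : ℝ) + 1)) (by positivity)
      refine ⟨(hLp ψ h1 h2).toLp, ⟨ψ, ⟨h1, h2, h3, h4⟩, (hLp ψ h1 h2).coeFn_toLp⟩, ?_⟩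
      rw [Lp.norm_toLp]
      refine ENNReal.toReal_le_coe_of_le_coe ?_
      refine le_trans (le_of_eq ?_) h5
      exact eLpNorm_congr_norm_ae (Eventually.of_forall fun x => J.norm_map _)
  obtain ⟨d, hdA, hdC⟩ := key
  choose φ hφ hdφ using hdA
  refine ⟨φ, fun m => ⟨(hφ m).1, (hφ m).2.1, (hφ m).2.2.1⟩, ?_, ?_⟩
  · refine tendsto_of_tendsto_of_tendsto_of_le_of_le tendsto_const_nhds ?_
      (fun m => zero_le) (fun m => (hφ m).2.2.2)
    have := ENNReal.tendsto_ofReal (tendsto_one_div_add_atTop_nhds_zero_nat (𝕜 := ℝ))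
    simpa using this
  · intro ε hε
    obtain ⟨N, hN⟩ := Metric.cauchySeq_iff.1 hdC ε hε
    refine ⟨N, fun m l hm hl => ?_⟩
    have h1 := hN m hm l hl
    have h2 : eLpNorm (fun x => fderiv ℝ (φ m) x - fderiv ℝ (φ l) x) 2 volume
        = ‖d m - d l‖ₑ := by
      rw [Lp.enorm_def]
      refine eLpNorm_congr_norm_ae ?_
      filter_upwards [hdφ m, hdφ l, Lp.coeFn_sub (d m) (d l)] with x e1 e2 e3
      rw [e3, Pi.sub_apply, e1, e2, ← map_sub, LinearIsometryEquiv.norm_map]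
    rw [h2, ← ofReal_norm, ← dist_eq_norm]
    exact (ENNReal.ofReal_lt_ofReal_iff hε).2 h1

/-- Mollification of a continuous compactly supported function with a translation estimate. -/
theorem mollify {n : ℕ} {ω : Set (EuclideanSpace ℝ (Fin n))} (hω : IsOpen ω)
    {g : EuclideanSpace ℝ (Fin n) → ℝ} (hg : Continuous g) (hgs : HasCompactSupport g)
    (hgω : tsupport g ⊆ ω) (A : NNReal) (r : ℝ) (hr : 0 < r)
    (hA : ∀ h : EuclideanSpace ℝ (Fin n), ‖h‖ < r →
      eLpNorm (fun x => g (x + h) - g x) 2 volume ≤ A * ‖h‖ₑ) (δ : ℝ) (hδ : 0 < δ) :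
    ∃ ψ : EuclideanSpace ℝ (Fin n) → ℝ, ContDiff ℝ 1 ψ ∧
      HasCompactSupport ψ ∧ tsupport ψ ⊆ ω ∧ eLpNorm (g - ψ) 2 volume ≤ ENNReal.ofReal δ ∧
      eLpNorm (fderiv ℝ ψ) 2 volume ≤ n * A := by
  obtain ⟨ρ, hρ, hρω⟩ := IsCompact.exists_cthickening_subset_open hgs hω hgω
  obtain ⟨s, hs, hsρ, hsr, hsδ⟩ : ∃ s : ℝ, 0 < s ∧ s ≤ ρ ∧ s ≤ r ∧ A * s ≤ δ := by
    refine ⟨min (min ρ r) (δ / (A + 1)), ?_, ?_, ?_, ?_⟩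
    · have : (0 : ℝ) ≤ A := A.2
      positivity
    · exact (min_le_left _ _).trans (min_le_left _ _)
    · exact (min_le_left _ _).trans (min_le_right _ _)
    · have hA0 : (0 : ℝ) ≤ A := A.2
      calc (A : ℝ) * min (min ρ r) (δ / (A + 1)) ≤ (A + 1) * (δ / (A + 1)) := by
            gcongr
            · linarith
            · exact min_le_right _ _
        _ = δ := by field_simp
  let f : ContDiffBump (0 : EuclideanSpace ℝ (Fin n)) := ⟨s / 2, s, by positivity, by linarith⟩
  set η := f.normed volume with hη
  have hηc : Continuous η := f.continuous_normed
  have hη0 : ∀ x, 0 ≤ η x := f.nonneg_normed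
  have hηsupp : Function.support η = Metric.ball 0 s := f.support_normed_eq
  set ν : Measure (EuclideanSpace ℝ (Fin n)) :=
    volume.withDensity (fun t => ((η t).toNNReal : ENNReal)) with hν
  have hmeas : Measurable (fun t => (η t).toNNReal) := hηc.measurable.real_toNNReal
  have hprob : IsProbabilityMeasure ν := by
    refine ⟨?_⟩
    rw [hν, withDensity_apply _ MeasurableSet.univ, Measure.restrict_univ]
    have : ∫⁻ t, ENNReal.ofReal (η t) = 1 := by
      rw [← ofReal_integral_eq_lintegral_ofReal f.integrable_normed (Eventually.of_forall hη0),
        f.integral_normed, ENNReal.ofReal_one]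
    exact this
  have hae : ∀ᵐ t ∂ν, ‖t‖ < s := by
    rw [hν, ae_withDensity_iff (by fun_prop)]
    refine Eventually.of_forall fun t ht => ?_
    have : t ∈ Function.support η := by
      intro h0
      apply ht
      simp [h0]
    rw [hηsupp] at this
    simpa using this
  set ψ : EuclideanSpace ℝ (Fin n) → ℝ :=
    convolution η g (ContinuousLinearMap.lsmul ℝ ℝ) volume with hψ
  have hψν : ∀ x, ψ x = ∫ t, g (x - t) ∂ν := by
    intro x
    rw [hν, integral_withDensity_eq_integral_smul hmeas, hψ, convolution_def]
    refine integral_congr_ae (Eventually.of_forall fun t => ?_)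
    simp [NNReal.smul_def, Real.coe_toNNReal _ (hη0 t)]
  have hint : ∀ x, Integrable (fun t => g (x - t)) ν := by
    intro x
    refine Continuous.integrable_of_hasCompactSupport (by fun_prop) ?_
    exact hgs.comp_homeomorph (Homeomorph.subLeft x)
  have hψc : ContDiff ℝ 1 ψ := by
    have := HasCompactSupport.contDiff_convolution_left (𝕜 := ℝ) (μ := volume) (n := 1)
      (ContinuousLinearMap.lsmul ℝ ℝ) f.hasCompactSupport_normed (f.contDiff_normed (μ := volume))
      hg.locallyIntegrable
    exact_mod_cast this
  have hsub : tsupport ψ ⊆ Metric.cthickening s (tsupport g) := by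
    refine closure_minimal ?_ Metric.isClosed_cthickening
    refine (support_convolution_subset _).trans ?_
    rintro _ ⟨a, ha, b, hb, rfl⟩
    rw [hηsupp] at ha
    refine Metric.mem_cthickening_of_dist_le _ b _ _ (subset_tsupport _ hb) ?_
    simp only [dist_eq_norm, add_sub_cancel_right]
    simpa using (mem_ball_zero_iff.1 ha).le
  refine ⟨ψ, hψc, ?_, hsub.trans ((Metric.cthickening_mono hsρ _).trans hρω), ?_, ?_⟩
  · exact HasCompactSupport.of_support_subset_isCompact (hgs.isCompact.cthickening)
      ((subset_tsupport _).trans hsub)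
  · have e : g - ψ = fun x => ∫ t, (g x - g (x - t)) ∂ν := by
      ext x
      rw [integral_sub (integrable_const _) (hint x), Pi.sub_apply, hψν]
      simp
    rw [e]
    refine eLpNorm_average_le _ _ (fun x t => g x - g (x - t)) ?_ _ ?_
    · apply Continuous.measurable
      unfold Function.uncurry
      fun_prop
    · filter_upwards [hae] with t ht
      have h1 := hA (-t) (by rw [norm_neg]; linarith)
      have h2 : eLpNorm (fun x => g x - g (x - t)) 2 volume
          = eLpNorm (fun x => g (x + -t) - g x) 2 volume := by
        refine eLpNorm_congr_norm_ae (Eventually.of_forall fun x => ?_)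
        simp only [← sub_eq_add_neg]
        exact norm_sub_rev _ _
      rw [h2]
      refine h1.trans ?_
      rw [enorm_neg, ← ofReal_norm, ← ENNReal.ofReal_coe_nnreal, ← ENNReal.ofReal_mul A.coe_nonneg]
      apply ENNReal.ofReal_le_ofReal
      refine le_trans ?_ hsδ
      have := A.2
      gcongr
  · refine fderiv_le_of_translate hψc A r hr fun h hh => ?_
    have e : (fun x => ψ (x + h) - ψ x) = fun x => ∫ t, (g (x + h - t) - g (x - t)) ∂ν := by
      ext x
      rw [integral_sub (hint (x + h)) (hint x), hψν, hψν]
    rw [e]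
    refine eLpNorm_average_le _ _ (fun x t => g (x + h - t) - g (x - t)) ?_ _ ?_
    · apply Continuous.measurable
      unfold Function.uncurry
      fun_prop
    · refine Eventually.of_forall fun t => ?_
      refine le_trans (le_of_eq ?_) (hA h hh)
      rw [← eLpNorm_translate (f := fun x => g (x + h) - g x)
        (by apply Continuous.aestronglyMeasurable; fun_prop) (-t)]
      congr 1
      ext x
      congr 2 <;> abel


/-- The case in which `u` is positive on the component. -/
theorem restriction_pos {n : ℕ} (Ω : Set (EuclideanSpace ℝ (Fin n)))
    (hΩ : IsOpen Ω) (hvol : volume Ω < ⊤) (u : EuclideanSpace ℝ (Fin n) → ℝ)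
    (hu : MemH10 Ω u) (hcont : ContinuousOn u Ω) (hzero : ∀ x ∉ Ω, u x = 0)
    (x₀ : EuclideanSpace ℝ (Fin n)) (hx₀ : x₀ ∈ Ω) (hux₀ : 0 < u x₀)
    (ω : Set (EuclideanSpace ℝ (Fin n)))
    (hω : ω = connectedComponentIn {x ∈ Ω | u x ≠ 0} x₀) :
    MemH10 ω (Set.indicator ω u) := by
  set U := {x ∈ Ω | u x ≠ 0} with hU
  have hUo : IsOpen U := by
    have := hcont.isOpen_inter_preimage hΩ (isOpen_compl_singleton (x := (0:ℝ)))
    exact this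
  have hωo : IsOpen ω := hω ▸ hUo.connectedComponentIn
  have hωU : ω ⊆ U := hω ▸ connectedComponentIn_subset U x₀
  have hωΩ : ω ⊆ Ω := fun x hx => (hωU hx).1
  have hx₀ω : x₀ ∈ ω := hω ▸ mem_connectedComponentIn ⟨hx₀, hux₀.ne'⟩
  have hωc : IsPreconnected ω := hω ▸ isPreconnected_connectedComponentIn
  have hpos : ∀ x ∈ ω, 0 < u x := by
    intro x hx
    by_contra hneg
    obtain ⟨y, hy, hy0⟩ := hωc.intermediate_value hx hx₀ω (hcont.mono hωΩ)
      ⟨not_lt.1 hneg, hux₀.le⟩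
    exact (hωU hy).2 hy0
  have hclos : ∀ x ∈ closure ω, x ∈ U → x ∈ ω := by
    intro x hx hxU
    have h1 : IsOpen (connectedComponentIn U x) := hUo.connectedComponentIn
    obtain ⟨y, hy1, hy2⟩ := mem_closure_iff.1 hx _ h1 (mem_connectedComponentIn hxU)
    rw [hω] at hy2 ⊢
    rw [connectedComponentIn_eq hy2, ← connectedComponentIn_eq hy1]
    exact mem_connectedComponentIn hxU
  have hum : AEStronglyMeasurable u volume := by
    have h1 : u = Ω.indicator u := by
      ext x
      by_cases hx : x ∈ Ω
      · simp [hx]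
      · simp [hx, hzero x hx]
    rw [h1, aestronglyMeasurable_indicator_iff hΩ.measurableSet]
    exact hcont.aestronglyMeasurable hΩ.measurableSet
  obtain ⟨φ, hφ, hφu, hφC⟩ := hu
  have hLp : ∀ m, MemLp (fderiv ℝ (φ m)) 2 volume := by
    intro m
    exact Continuous.memLp_of_hasCompactSupport ((hφ m).1.continuous_fderiv one_ne_zero)
      ((hφ m).2.1.fderiv ℝ)
  obtain ⟨N, hN⟩ := hφC 1 one_pos
  obtain ⟨A, hA⟩ : ∃ A : NNReal, ∀ m, N ≤ m → eLpNorm (fderiv ℝ (φ m)) 2 volume ≤ A := by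
    have hfin : eLpNorm (fderiv ℝ (φ N)) 2 volume + 1 ≠ ⊤ := by
      simpa using (hLp N).2.ne
    refine ⟨(eLpNorm (fderiv ℝ (φ N)) 2 volume + 1).toNNReal, fun m hm => ?_⟩
    rw [ENNReal.coe_toNNReal hfin]
    have h1 := eLpNorm_add_le (p := 2) (hLp N).1 ((hLp m).1.sub (hLp N).1) (by norm_num)
    have h2 := hN m N hm le_rfl
    rw [add_sub_cancel] at h1
    refine h1.trans ?_
    gcongr
    refine le_trans h2.le ?_
    simp
  have hφtr : ∀ m, N ≤ m → ∀ h : EuclideanSpace ℝ (Fin n),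
      eLpNorm (fun x => φ m (x + h) - φ m x) 2 volume ≤ A * ‖h‖ₑ := by
    intro m hm h
    refine (translate_le (hφ m).1 h).trans ?_
    rw [mul_comm]
    gcongr
    exact hA m hm
  have hshift : ∀ (f : EuclideanSpace ℝ (Fin n) → ℝ) (h : EuclideanSpace ℝ (Fin n)),
      AEStronglyMeasurable f volume → AEStronglyMeasurable (fun x => f (x + h)) volume :=
    fun f h hf => hf.comp_measurePreserving (measurePreserving_add_right volume h)
  have hutr : ∀ h : EuclideanSpace ℝ (Fin n),
      eLpNorm (fun x => u (x + h) - u x) 2 volume ≤ A * ‖h‖ₑ := by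
    intro h
    have hlim : Tendsto (fun m => eLpNorm (u - φ m) 2 volume + (A * ‖h‖ₑ +
        eLpNorm (u - φ m) 2 volume)) atTop (nhds (0 + (A * ‖h‖ₑ + 0))) :=
      hφu.add (tendsto_const_nhds.add hφu)
    rw [add_zero, zero_add] at hlim
    refine ge_of_tendsto hlim ?_
    filter_upwards [eventually_ge_atTop N] with m hm
    have hmm : AEStronglyMeasurable (φ m) volume := (hφ m).1.continuous.aestronglyMeasurable
    have hd := hum.sub hmm
    have e : (fun x => u (x + h) - u x) = (fun x => (u - φ m) (x + h)) +
        ((fun x => φ m (x + h) - φ m x) + (φ m - u)) := by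
      ext x
      simp only [Pi.add_apply, Pi.sub_apply]
      ring
    have hd2 : AEStronglyMeasurable (fun x => φ m (x + h) - φ m x) volume :=
      (hshift _ h hmm).sub hmm
    rw [e]
    refine (eLpNorm_add_le (hshift _ h hd) (hd2.add (hmm.sub hum)) (by norm_num)).trans ?_
    rw [eLpNorm_translate hd]
    gcongr
    refine (eLpNorm_add_le hd2 (hmm.sub hum) (by norm_num)).trans ?_
    rw [eLpNorm_sub_comm (φ m) u]
    gcongr
    exact hφtr m hm h
  refine memH10_of_bdd (hum.indicator hωo.measurableSet) (n * (2 * A)) fun δ hδ => ?_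
  -- choice of the truncation level
  obtain ⟨ε, hε, hεδ⟩ : ∃ ε : ℝ, 0 < ε ∧
      ENNReal.ofReal ε * volume Ω ^ (1 / (2 : ENNReal).toReal) ≤ ENNReal.ofReal (δ / 3) := by
    set V := volume Ω ^ (1 / (2 : ENNReal).toReal) with hV
    have hVt : V ≠ ⊤ := by
      rw [hV]
      exact ENNReal.rpow_ne_top_of_nonneg (by positivity) hvol.ne
    refine ⟨δ / 3 / (V.toReal + 1), by positivity, ?_⟩
    rw [← ENNReal.ofReal_toReal hVt, ← ENNReal.ofReal_mul (by positivity)]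
    apply ENNReal.ofReal_le_ofReal
    rw [ENNReal.toReal_ofReal ENNReal.toReal_nonneg, div_mul_eq_mul_div, div_le_iff₀ (by positivity)]
    gcongr
    linarith
  obtain ⟨m, hmN, hmδ⟩ : ∃ m, N ≤ m ∧ eLpNorm (u - φ m) 2 volume ≤ ENNReal.ofReal (δ / 3) := by
    have h1 : ∀ᶠ m in atTop, eLpNorm (u - φ m) 2 volume < ENNReal.ofReal (δ / 3) :=
      hφu.eventually_lt_const (by simpa using hδ)
    obtain ⟨m, h2, h3⟩ := ((eventually_ge_atTop N).and h1).exists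
    exact ⟨m, h2, h3.le⟩
  obtain ⟨hφ1, hφ2, hφ3⟩ := hφ m
  have hmm : AEStronglyMeasurable (φ m) volume := hφ1.continuous.aestronglyMeasurable
  set G : EuclideanSpace ℝ (Fin n) → ℝ := fun x => max (min (u x) (φ m x) - ε) 0 with hG
  set g := ω.indicator G with hg
  set K := (tsupport (φ m) ∩ u ⁻¹' Set.Ici ε) ∩ closure ω with hK
  have hKc : IsCompact K := by
    refine hφ2.isCompact.of_isClosed_subset ?_ (fun x hx => hx.1.1)
    refine IsClosed.inter ?_ isClosed_closure
    exact (hcont.mono hφ3).preimage_isClosed_of_isClosed (isClosed_tsupport _) isClosed_Ici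
  have hKω : K ⊆ ω := by
    intro x hx
    have h1 : ε ≤ u x := hx.1.2
    exact hclos x hx.2 ⟨hφ3 hx.1.1, (hε.trans_le h1).ne'⟩
  have hgK : Function.support g ⊆ K := by
    intro x hx
    have hxω : x ∈ ω := Set.mem_of_indicator_ne_zero hx
    have h1 : G x ≠ 0 := by
      rw [Function.mem_support, hg, Set.indicator_of_mem hxω] at hx
      exact hx
    have h2 : 0 < min (u x) (φ m x) - ε := by
      by_contra h3
      exact h1 (max_eq_right (not_lt.1 h3))
    have h3 : ε < u x := by linarith [min_le_left (u x) (φ m x)]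
    have h4 : ε < φ m x := by linarith [min_le_right (u x) (φ m x)]
    refine ⟨⟨subset_tsupport _ ?_, h3.le⟩, subset_closure hxω⟩
    exact (hε.trans h4).ne'
  have hgK' : tsupport g ⊆ K := closure_minimal hgK hKc.isClosed
  have hgs : HasCompactSupport g := hKc.of_isClosed_subset (isClosed_tsupport _) hgK'
  have hgcont : Continuous g := by
    refine continuous_of_tsupport fun x hx => ?_
    have hxω := hKω (hgK' hx)
    have hxn : ω ∈ nhds x := hωo.mem_nhds hxω
    have h1 : ContinuousAt u x := hcont.continuousAt (hΩ.mem_nhds (hωΩ hxω))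
    have h2 : ContinuousAt G x :=
      ((h1.min hφ1.continuous.continuousAt).sub continuousAt_const).max continuousAt_const
    refine h2.congr ?_
    filter_upwards [hxn] with y hy
    rw [hg, Set.indicator_of_mem hy]
  obtain ⟨r, hr, hrω⟩ := hKc.exists_thickening_subset_open hωo hKω
  have hout : ∀ x y, dist x y < r → x ∈ ω → y ∉ ω → G x = 0 := by
    intro x y hxy hx hy
    by_contra hne
    have hxK : x ∈ K := hgK (by rw [Function.mem_support, hg, Set.indicator_of_mem hx]; exact hne)
    exact hy (hrω (Metric.mem_thickening_iff.2 ⟨x, hxK, by rwa [dist_comm]⟩))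
  have hgtr : ∀ h : EuclideanSpace ℝ (Fin n), ‖h‖ < r →
      eLpNorm (fun x => g (x + h) - g x) 2 volume ≤ (2 * A : NNReal) * ‖h‖ₑ := by
    intro h hh
    have hd1 : AEStronglyMeasurable (fun x => u (x + h) - u x) volume := (hshift _ h hum).sub hum
    have hd2 : AEStronglyMeasurable (fun x => φ m (x + h) - φ m x) volume :=
      (hshift _ h hmm).sub hmm
    have hGle : ∀ x y, |G y - G x| ≤ |u y - u x| + |φ m y - φ m x| := by
      intro x y
      have h1 : |G y - G x| ≤ |(min (u y) (φ m y) - ε) - (min (u x) (φ m x) - ε)| :=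
        abs_max_sub_max_le_abs _ _ _
      have h2 := abs_min_sub_min_le_max (u y) (φ m y) (u x) (φ m x)
      have h3 : max |u y - u x| |φ m y - φ m x| ≤ |u y - u x| + |φ m y - φ m x| :=
        max_le (by linarith [abs_nonneg (φ m y - φ m x)]) (by linarith [abs_nonneg (u y - u x)])
      rw [sub_sub_sub_cancel_right] at h1
      linarith
    calc eLpNorm (fun x => g (x + h) - g x) 2 volume
        ≤ eLpNorm ((fun x => ‖u (x + h) - u x‖) + fun x => ‖φ m (x + h) - φ m x‖) 2 volume := by
          refine eLpNorm_mono fun x => ?_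
          simp only [Pi.add_apply, Real.norm_eq_abs]
          rw [abs_of_nonneg (add_nonneg (abs_nonneg (u (x + h) - u x))
            (abs_nonneg (φ m (x + h) - φ m x)))]
          have hGx := hGle x (x + h)
          by_cases h1 : x + h ∈ ω <;> by_cases h2 : x ∈ ω
          · simpa only [hg, Set.indicator_of_mem h1, Set.indicator_of_mem h2] using hGx
          · rw [hg, Set.indicator_of_mem h1, Set.indicator_of_notMem h2,
              hout (x + h) x (by simpa [dist_eq_norm] using hh) h1 h2]
            simp only [sub_zero, abs_zero]
            positivity
          · rw [hg, Set.indicator_of_notMem h1, Set.indicator_of_mem h2,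
              hout x (x + h) (by simpa [dist_eq_norm] using hh) h2 h1]
            simp only [sub_zero, abs_zero]
            positivity
          · rw [hg, Set.indicator_of_notMem h1, Set.indicator_of_notMem h2]
            simp only [sub_zero, abs_zero]
            positivity
      _ ≤ A * ‖h‖ₑ + A * ‖h‖ₑ := by
          refine (eLpNorm_add_le hd1.norm hd2.norm (by norm_num)).trans ?_
          rw [eLpNorm_norm, eLpNorm_norm]
          exact add_le_add (hutr h) (hφtr m hmN h)
      _ = (2 * A : NNReal) * ‖h‖ₑ := by
          push_cast
          ring
  obtain ⟨ψ, h1, h2, h3, h4, h5⟩ := mollify hωo hgcont hgs (hgK'.trans hKω) (2 * A) r hr hgtr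
    (δ / 3) (by positivity)
  refine ⟨ψ, h1, h2, h3, ?_, ?_⟩
  · have hvm : AEStronglyMeasurable (ω.indicator u) volume := hum.indicator hωo.measurableSet
    have hgm : AEStronglyMeasurable g volume := hgcont.aestronglyMeasurable
    have e : ω.indicator u - ψ = (ω.indicator u - g) + (g - ψ) := by abel
    have h6 : eLpNorm (ω.indicator u - g) 2 volume ≤
        ENNReal.ofReal (δ / 3) + ENNReal.ofReal (δ / 3) := by
      calc eLpNorm (ω.indicator u - g) 2 volume
          ≤ eLpNorm ((fun x => ‖(u - φ m) x‖) + Ω.indicator fun _ => ε) 2 volume := by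
            refine eLpNorm_mono fun x => ?_
            have hnn : 0 ≤ (Ω.indicator (fun _ => ε) : EuclideanSpace ℝ (Fin n) → ℝ) x :=
              Set.indicator_nonneg (fun _ _ => hε.le) x
            rw [Pi.add_apply, Real.norm_of_nonneg (add_nonneg (norm_nonneg _) hnn)]
            by_cases hx : x ∈ ω
            · rw [Pi.sub_apply, hg, Set.indicator_of_mem hx, Set.indicator_of_mem hx,
                Set.indicator_of_mem (hωΩ hx), Pi.sub_apply, Real.norm_eq_abs, Real.norm_eq_abs]
              have hux := hpos x hx
              simp only [hG]
              have i1 := neg_abs_le (u x - φ m x)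
              have i2 := le_abs_self (u x - φ m x)
              rw [abs_le]
              constructor
              · have : max (min (u x) (φ m x) - ε) 0 ≤ u x :=
                  max_le (by linarith [min_le_left (u x) (φ m x)]) hux.le
                linarith [abs_nonneg (u x - φ m x)]
              · have i3 := le_max_left (min (u x) (φ m x) - ε) 0
                rcases min_cases (u x) (φ m x) with ⟨h7, _⟩ | ⟨h7, _⟩ <;> rw [h7] at i3 ⊢ <;>
                  linarith [abs_nonneg (u x - φ m x)]
            · rw [Pi.sub_apply, hg, Set.indicator_of_notMem hx, Set.indicator_of_notMem hx]
              simp only [sub_zero, norm_zero]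
              exact add_nonneg (norm_nonneg _) hnn
        _ ≤ ENNReal.ofReal (δ / 3) + ENNReal.ofReal (δ / 3) := by
            refine (eLpNorm_add_le (hum.sub hmm).norm
              (aestronglyMeasurable_const.indicator hΩ.measurableSet) (by norm_num)).trans ?_
            rw [eLpNorm_norm, eLpNorm_indicator_const hΩ.measurableSet (by norm_num) (by norm_num),
              Real.enorm_of_nonneg hε.le]
            exact add_le_add hmδ hεδ
    rw [e]
    refine (eLpNorm_add_le (hvm.sub hgm) (hgm.sub h1.continuous.aestronglyMeasurable)
      (by norm_num)).trans ?_
    refine (add_le_add h6 h4).trans (le_of_eq ?_)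
    rw [← ENNReal.ofReal_add (by positivity) (by positivity),
      ← ENNReal.ofReal_add (by positivity) (by positivity)]
    congr 1
    ring
  · refine h5.trans (le_of_eq ?_)
    push_cast
    rfl

theorem restriction_to_nodal_domain {n : ℕ} (Ω : Set (EuclideanSpace ℝ (Fin n)))
    (hΩ : IsOpen Ω) (hvol : volume Ω < ⊤) (u : EuclideanSpace ℝ (Fin n) → ℝ)
    (hu : MemH10 Ω u) (hcont : ContinuousOn u Ω) (hzero : ∀ x ∉ Ω, u x = 0)
    (x₀ : EuclideanSpace ℝ (Fin n)) (hx₀ : x₀ ∈ Ω) (hux₀ : u x₀ ≠ 0)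
    (ω : Set (EuclideanSpace ℝ (Fin n)))
    (hω : ω = connectedComponentIn {x ∈ Ω | u x ≠ 0} x₀) :
    MemH10 ω (Set.indicator ω u) := by
  have hneg : ∀ (S : Set (EuclideanSpace ℝ (Fin n))) (w : EuclideanSpace ℝ (Fin n) → ℝ),
      MemH10 S w → MemH10 S (-w) := by
    rintro S w ⟨φ, h1, h2, h3⟩
    refine ⟨fun m => -φ m, fun m => ⟨(h1 m).1.neg, ?_, ?_⟩, ?_, ?_⟩
    · exact (h1 m).2.1.neg
    · have : tsupport (-φ m) = tsupport (φ m) := by simp [tsupport]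
      rw [this]
      exact (h1 m).2.2
    · refine h2.congr fun m => ?_
      rw [← eLpNorm_neg]
      congr 1
      ext x
      simp only [Pi.neg_apply, Pi.sub_apply]
      ring
    · intro ε hε
      obtain ⟨N, hN⟩ := h3 ε hε
      refine ⟨N, fun m l hm hl => ?_⟩
      refine lt_of_eq_of_lt ?_ (hN m l hm hl)
      refine eLpNorm_congr_norm_ae (Eventually.of_forall fun x => ?_)
      simp only [fderiv_neg]
      rw [← norm_neg]
      congr 1
      abel
  rcases lt_or_gt_of_ne hux₀ with hlt | hgt
  · have := restriction_pos Ω hΩ hvol (-u) (hneg _ _ hu) hcont.neg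
      (fun x hx => by simp [hzero x hx]) x₀ hx₀ (by simpa using hlt) ω (by simpa using hω)
    have h2 := hneg _ _ this
    rwa [Set.indicator_neg', neg_neg] at h2
  · exact restriction_pos Ω hΩ hvol u hu hcont hzero x₀ hx₀ hgt ω hω
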